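/- arXiv:2603.21680 — 2 statements merged into one kernel-verified Lean document; each statement's English description precedes it below -/
import Mathlib

section
/- For all integers d ≥ 0 and t ≥ 0, ∑_{i=0}^{d} A(d+1,i) · (i − d/2)^{2t} ≤ ((d+2)/12)^t · (2t−1)!! · (d+1)!, where (2t−1)!! = (2t−1)(2t−3)⋯3·1 (and (−1)!! = 1). -/
open Finset

/-- The number of descents of a permutation of `Fin n`. -/
def descentCount {n : ℕ} (σ : Equiv.Perm (Fin n)) : ℕ :=
  (Finset.univ.filter fun i : Fin n =>
    ∃ h : (i : ℕ) + 1 < n, σ ⟨(i : ℕ) + 1, h⟩ < σ i).card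

/-- The Eulerian number `A(n,k)`: the number of permutations of `{1,…,n}` with
exactly `k` descents. -/
def eulerian (n k : ℕ) : ℕ :=
  (Finset.univ.filter fun σ : Equiv.Perm (Fin n) => descentCount σ = k).card


/-- descents of a word, as a sum -/
def wdes (w : ℕ → ℕ) (m : ℕ) : ℕ := ∑ i ∈ range m, if w (i+1) < w i then 1 else 0

def wins (w : ℕ → ℕ) (n p : ℕ) (i : ℕ) : ℕ := if i < p then w i else if i = p then n else w (i-1)

lemma wdes_ins (w : ℕ → ℕ) (n p : ℕ) (hw : ∀ i < n + 1, w i < n + 1) (hp : p ≤ n + 1) :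
    wdes (wins w (n+1) p) (n+1) =
      if p = n + 1 ∨ (1 ≤ p ∧ w p < w (p-1)) then wdes w n else wdes w n + 1 := by
  unfold wdes
  obtain ⟨q, hq⟩ := Nat.exists_eq_add_of_le hp
  rw [show range (n+1) = range (p+q) by rw [hq], sum_range_add]
  rcases p with _ | p
  · have hq' : q = n + 1 := by omega
    subst hq'
    rw [sum_range_succ' _ n]
    simp only [range_zero, sum_empty, zero_add]
    have h1 : ∀ i ∈ range n, (if wins w (n+1) 0 (i+1+1) < wins w (n+1) 0 (i+1) then 1 else 0)
        = if w (i+1) < w i then 1 else 0 := by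
      intro i hi; simp [wins]
    rw [sum_congr rfl h1]
    have := hw 0 (by omega)
    simp [wins, this]
  · rw [sum_range_succ]
    have h1 : ∀ i ∈ range p, (if wins w (n+1) (p+1) (i+1) < wins w (n+1) (p+1) i then 1 else 0)
        = if w (i+1) < w i then 1 else 0 := by
      intro i hi
      have : i < p := mem_range.1 hi
      simp [wins, this, show i < p + 1 by omega]
    rw [sum_congr rfl h1]
    have hwp := hw p (by omega)
    have h2 : (if wins w (n+1) (p+1) (p+1) < wins w (n+1) (p+1) p then 1 else 0) = 0 := by
      simp [wins]; omega
    rw [h2]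
    rcases q with _ | q
    · have : p = n := by omega
      subst this
      simp
    · have hn : n = p + 1 + q := by omega
      rw [sum_range_succ' _ q]
      have h3 : ∀ i ∈ range q, (if wins w (n+1) (p+1) (p+1+(i+1)+1) < wins w (n+1) (p+1) (p+1+(i+1)) then 1 else 0)
        = if w (p+1+i+1) < w (p+1+i) then 1 else 0 := by
        intro i hi
        have a1 : wins w (n+1) (p+1) (p+1+(i+1)+1) = w (p+1+i+1) := by
          unfold wins
          rw [if_neg (by omega), if_neg (by omega)]
          rfl
        have a2 : wins w (n+1) (p+1) (p+1+(i+1)) = w (p+1+i) := by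
          unfold wins
          rw [if_neg (by omega), if_neg (by omega)]
          rfl
        rw [a1, a2]
      rw [sum_congr rfl h3]
      have hwp1 := hw (p+1) (by omega)
      have h4 : (if wins w (n+1) (p+1) (p+1+0+1) < wins w (n+1) (p+1) (p+1+0) then 1 else 0) = 1 := by
        simp [wins]; omega
      rw [h4, hn, sum_range_add, sum_range_succ]
      have : ¬ (p + 1 = p + 1 + q + 1) := by omega
      simp only [this, false_or, Nat.add_sub_cancel]
      split_ifs <;> omega

lemma wdes_le (w : ℕ → ℕ) (n : ℕ) : wdes w n ≤ n := by
  unfold wdes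
  calc _ ≤ ∑ i ∈ range n, 1 := sum_le_sum (by intros; split_ifs <;> omega)
    _ = n := by simp

lemma sum_wdes_ins (w : ℕ → ℕ) (n : ℕ) (hw : ∀ i < n + 1, w i < n + 1) (f : ℕ → ℝ) :
    ∑ p ∈ range (n+2), f (wdes (wins w (n+1) p) (n+1)) =
      (wdes w n + 1) * f (wdes w n) + ((n:ℝ) + 1 - wdes w n) * f (wdes w n + 1) := by
  have h : ∀ p ∈ range (n+2), f (wdes (wins w (n+1) p) (n+1)) =
      if p = n + 1 ∨ (1 ≤ p ∧ w p < w (p-1)) then f (wdes w n) else f (wdes w n + 1) := by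
    intro p hp
    rw [wdes_ins w n p hw (by simp at hp; omega)]
    split_ifs <;> rfl
  rw [sum_congr rfl h, sum_range_succ, sum_range_succ']
  have h2 : ∀ p ∈ range n, (if p + 1 = n + 1 ∨ (1 ≤ p + 1 ∧ w (p+1) < w (p+1-1)) then f (wdes w n) else f (wdes w n + 1))
     = f (wdes w n + 1) + ((if w (p+1) < w p then 1 else 0 : ℕ) : ℝ) * (f (wdes w n) - f (wdes w n + 1)) := by
    intro p hp
    have : p ≠ n := by simp at hp; omega
    by_cases h : w (p+1) < w p <;> simp [this, h]
  rw [sum_congr rfl h2, sum_add_distrib, ← sum_mul, ← Nat.cast_sum]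
  change _ + ((wdes w n : ℕ) : ℝ) * _ + _ + _ = _
  simp
  ring

def word {n : ℕ} (σ : Equiv.Perm (Fin n)) (i : ℕ) : ℕ := if h : i < n then (σ ⟨i, h⟩ : ℕ) else 0

lemma descentCount_eq {n : ℕ} (σ : Equiv.Perm (Fin (n+1))) : descentCount σ = wdes (word σ) n := by
  unfold descentCount wdes
  rw [card_filter, Fin.sum_univ_castSucc]
  simp only [Fin.val_last, lt_self_iff_false, IsEmpty.exists_iff, if_false, add_zero]
  rw [Finset.sum_range]
  refine sum_congr rfl fun i _ => ?_
  have := i.2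
  simp [word, this, show (i:ℕ) < n + 1 by omega, Fin.castSucc, Fin.castAdd, Fin.castLE]

noncomputable def insPerm {n : ℕ} (x : Fin (n+1) × Equiv.Perm (Fin n)) : Equiv.Perm (Fin (n+1)) :=
  ((finSuccEquiv' x.1).trans (Equiv.optionCongr x.2)).trans (finSuccEquiv' (Fin.last n)).symm

lemma insPerm_self {n : ℕ} (p : Fin (n+1)) (σ : Equiv.Perm (Fin n)) : insPerm (p, σ) p = Fin.last n := by
  simp [insPerm]

lemma insPerm_succAbove {n : ℕ} (p : Fin (n+1)) (σ : Equiv.Perm (Fin n)) (i : Fin n) :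
    insPerm (p, σ) (p.succAbove i) = (σ i).castSucc := by
  simp [insPerm]

lemma insPerm_bij (n : ℕ) : Function.Bijective (insPerm (n := n)) := by
  rw [Fintype.bijective_iff_injective_and_card]
  constructor
  · rintro ⟨p, σ⟩ ⟨q, τ⟩ h
    have hpq : p = q := by
      apply (insPerm (q, τ)).injective
      rw [insPerm_self, ← h, insPerm_self]
    subst hpq
    congr 1
    ext i
    have := insPerm_succAbove p σ i
    rw [h, insPerm_succAbove] at this
    exact congrArg Fin.val (Fin.castSucc_injective _ this).symm
  · simp [Fintype.card_perm, Nat.factorial_succ]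

lemma word_insPerm {n : ℕ} (p : Fin (n+1)) (σ : Equiv.Perm (Fin n)) (i : ℕ) (hi : i < n + 1) :
    word (insPerm (p, σ)) i = wins (word σ) n p i := by
  have hp := p.2
  unfold wins
  simp only [word, hi, dif_pos]
  split_ifs with h1 h2 h3 h4
  · have := insPerm_succAbove p σ ⟨i, h2⟩
    rw [Fin.succAbove_of_castSucc_lt _ _ (by simpa [Fin.lt_def] using h1)] at this
    simpa [Fin.ext_iff] using congrArg Fin.val this
  · omega
  · have : (⟨i, hi⟩ : Fin (n+1)) = p := Fin.ext h3
    rw [this, insPerm_self]; rfl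
  · have := insPerm_succAbove p σ ⟨i-1, h4⟩
    rw [Fin.succAbove_of_le_castSucc _ _ (by simp [Fin.le_def]; omega)] at this
    have e : (⟨i - 1, h4⟩ : Fin n).succ = ⟨i, hi⟩ := by ext; simp; omega
    rw [e] at this
    simpa using congrArg Fin.val this
  · omega

lemma descent_rec (n : ℕ) (f : ℕ → ℝ) :
    ∑ σ : Equiv.Perm (Fin (n+2)), f (descentCount σ) =
    ∑ σ : Equiv.Perm (Fin (n+1)), (((descentCount σ : ℝ) + 1) * f (descentCount σ) +
      ((n:ℝ) + 1 - descentCount σ) * f (descentCount σ + 1)) := by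
  rw [← (insPerm_bij (n+1)).sum_comp (fun σ => f (descentCount σ)), Fintype.sum_prod_type_right]
  refine sum_congr rfl fun σ _ => ?_
  simp only [descentCount_eq]
  rw [← sum_wdes_ins, Finset.sum_range]
  · refine sum_congr rfl fun p _ => ?_
    congr 1
    unfold wdes
    refine sum_congr rfl fun i hi => ?_
    have := mem_range.1 hi
    rw [word_insPerm _ _ _ (by omega), word_insPerm _ _ _ (by omega)]
  · intro i hi
    simp only [word, hi, dif_pos]
    exact Fin.is_lt _

lemma eulerian_sum (d : ℕ) (f : ℕ → ℝ) :
    ∑ i ∈ range (d+1), (eulerian (d+1) i : ℝ) * f i = ∑ σ : Equiv.Perm (Fin (d+1)), f (descentCount σ) := by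
  rw [← sum_fiberwise_of_maps_to (s := univ) (t := range (d+1)) (g := fun σ : Equiv.Perm (Fin (d+1)) => descentCount σ)]
  · refine sum_congr rfl fun i _ => ?_
    rw [sum_congr rfl (g := fun _ => f i)]
    · simp [eulerian]
    · intro σ hσ; simp at hσ; rw [hσ]
  · intro σ _
    rw [descentCount_eq]
    have := wdes_le (word σ) d
    simp; omega

open Nat in
noncomputable def GG (N : ℝ) (t : ℕ) : ℝ := (N/12)^t * ((2 * t - 1)‼ : ℝ)

lemma GG_zero (N : ℝ) : GG N 0 = 1 := by simp [GG]

lemma GG_succ (N : ℝ) (t : ℕ) : GG N (t+1) = N/12 * (2*t+1) * GG N t := by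
  unfold GG
  rcases t with _ | t
  · simp
  · rw [show 2 * (t+1+1) - 1 = (2*(t+1)-1) + 2 by omega, Nat.doubleFactorial_add_two,
      show 2*(t+1)-1 + 2 = 2*t+3 by omega]
    push_cast
    ring

lemma GG_pos (N : ℝ) (hN : 0 < N) (t : ℕ) : 0 < GG N t := by
  induction t with
  | zero => simp [GG_zero]
  | succ t ih => rw [GG_succ]; positivity

lemma GG_eq (N : ℝ) (t : ℕ) : GG N t = (N/24)^t * ((2*t).factorial / t.factorial) := by
  induction t with
  | zero => simp [GG_zero]
  | succ t ih =>
    rw [GG_succ, ih, show 2 * (t+1) = 2*t+1+1 by ring, Nat.factorial_succ, Nat.factorial_succ, Nat.factorial_succ t]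
    push_cast
    have : ((t:ℝ)+1) ≠ 0 := by positivity
    field_simp
    ring

noncomputable def bb (j : ℕ) : ℝ := 6^j * j.factorial / (2*j).factorial

lemma bb_succ (j : ℕ) : bb (j+1) * (2*j+1) = 3 * bb j := by
  unfold bb
  rw [show 2 * (j+1) = 2*j+1+1 by ring, Nat.factorial_succ (2*j+1), Nat.factorial_succ (2*j), Nat.factorial_succ j]
  push_cast
  field_simp
  ring

lemma bb_pos (j : ℕ) : 0 < bb j := by unfold bb; positivity

noncomputable def ee (N : ℝ) (t j : ℕ) : ℝ := (t.choose j : ℝ) / N^j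

noncomputable def hh (N : ℝ) (t j : ℕ) : ℝ := bb j * ee N t j

lemma ee_nonneg {N : ℝ} (hN : 0 < N) (t j : ℕ) : 0 ≤ ee N t j := by unfold ee; positivity
lemma hh_nonneg {N : ℝ} (hN : 0 < N) (t j : ℕ) : 0 ≤ hh N t j :=
  mul_nonneg (bb_pos j).le (ee_nonneg hN t j)

lemma coef1 {N : ℝ} (hN : 0 < N) (t j : ℕ) (hj : j ≤ t) :
    ((2*t).choose (2*j) : ℝ) * (1/4)^j * GG N (t-j) = GG N t * hh N t j := by
  obtain ⟨s, rfl⟩ := Nat.exists_eq_add_of_le hj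
  rw [Nat.add_sub_cancel_left, GG_eq, GG_eq, hh, ee, bb, Nat.cast_choose ℝ (show 2*j ≤ 2*(j+s) by omega),
    Nat.cast_choose ℝ (show j ≤ j+s by omega), Nat.add_sub_cancel_left,
    show 2*(j+s) - 2*j = 2*s by omega]
  rw [pow_add, div_pow, div_pow, div_pow, show (24:ℝ)^j = 4^j*6^j by rw [← mul_pow]; norm_num, one_pow]
  field_simp

lemma coef2 {N : ℝ} (hN : 0 < N) (t j : ℕ) (hj : j ≤ t) :
    ((2*t).choose (2*j+1) : ℝ) / N * (1/4)^j * GG N (t-j) = GG N t * ((2*(j+1)/3) * hh N t (j+1)) := by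
  have h1 := coef1 hN t j hj
  have h2 : ((2*t).choose (2*j+1) : ℝ) * (2*j+1) = (2*t).choose (2*j) * (2*(t-j)) := by
    have := Nat.choose_succ_right_eq (2*t) (2*j)
    have h := congrArg (Nat.cast : ℕ → ℝ) this
    push_cast [Nat.cast_sub (show 2*j ≤ 2*t by omega)] at h
    linarith
  have h3 : ((t).choose (j+1) : ℝ) * (j+1) = (t).choose j * (t-j) := by
    have := Nat.choose_succ_right_eq t j
    have h := congrArg (Nat.cast : ℕ → ℝ) this
    push_cast [Nat.cast_sub hj] at h
    linarith
  have h4 : hh N t (j+1) * ((j+1) * (2*j+1)) = 3 * hh N t j * (t-j) / N := by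
    unfold hh ee
    have := bb_succ j
    calc bb (j+1) * (t.choose (j+1) / N^(j+1)) * ((j+1)*(2*j+1))
        = (bb (j+1) * (2*j+1)) * (t.choose (j+1) * (j+1)) / N^(j+1) := by ring
      _ = _ := by rw [this, h3, pow_succ]; field_simp
  have h5 : (0:ℝ) < 2*j+1 := by positivity
  rw [← mul_left_inj' h5.ne']
  calc _ = ((2*t).choose (2*j+1) * (2*j+1)) / N * (1/4)^j * GG N (t-j) := by ring
    _ = ((2*t).choose (2*j) * (1/4)^j * GG N (t-j)) * (2*(t-j)) / N := by rw [h2]; ring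
    _ = GG N t * hh N t j * (2*(t-j)) / N := by rw [h1]
    _ = GG N t * (2/3 * (3 * hh N t j * (t-j) / N)) := by ring
    _ = _ := by rw [← h4]; ring

/-- tail sums -/
lemma tail_le {N : ℝ} (hN : 0 < N) (t K : ℕ) : ∀ j0 : ℕ, 1 ≤ j0 →
    ∑ j ∈ range K, (hh N t (j0+j) - (2*((j0+j : ℕ)+1)/3) * hh N t (j0+j+1)) ≤ hh N t j0 := by
  induction K with
  | zero => intro j0 _; simpa using hh_nonneg hN t j0
  | succ K ih =>
    intro j0 h0
    rw [sum_range_succ']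
    have := ih (j0+1) (by omega)
    have e : ∀ j ∈ range K, (hh N t (j0+(j+1)) - (2*((j0+(j+1) : ℕ)+1)/3) * hh N t (j0+(j+1)+1))
      = (hh N t (j0+1+j) - (2*((j0+1+j : ℕ)+1)/3) * hh N t (j0+1+j+1)) := by
      intro j _; rw [show j0+(j+1) = j0+1+j by ring]
    rw [sum_congr rfl e]
    have h1 : (1:ℝ) ≤ j0 := by exact_mod_cast h0
    have := hh_nonneg hN t (j0+1)
    simp only [add_zero]
    nlinarith

noncomputable def TT (N : ℝ) (t j0 K : ℕ) : ℝ :=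
  ∑ j ∈ range K, (hh N t (j0+j) - (2*((j0+j : ℕ)+1)/3) * hh N t (j0+j+1))

lemma TT_succ (N : ℝ) (t j0 K : ℕ) :
    TT N t j0 (K+1) = hh N t j0 - (2*((j0:ℝ)+1)/3) * hh N t (j0+1) + TT N t (j0+1) K := by
  unfold TT
  rw [sum_range_succ', add_comm]
  congr 1
  refine sum_congr rfl fun j _ => ?_
  rw [show j0+(j+1) = j0+1+j by ring]

lemma pow_ge {N : ℝ} (hN : 0 < N) (t m : ℕ) : ∑ j ∈ range m, ee N t j ≤ (1 + 1/N)^t := by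
  have e : (1 + 1/N)^t = ∑ j ∈ range (t+1), ee N t j := by
    rw [add_comm, add_pow]
    refine sum_congr rfl fun j _ => ?_
    unfold ee; simp; ring
  have e2 : ∑ j ∈ range (t+1), ee N t j = ∑ j ∈ range (max m (t+1)), ee N t j := by
    apply sum_subset
    · intro x; simp; omega
    · intro x _ hx
      simp at hx
      simp [ee, Nat.choose_eq_zero_of_lt (show t < x by omega)]
  rw [e, e2]
  apply sum_le_sum_of_subset_of_nonneg
  · intro x; simp; omega
  · intros; exact ee_nonneg hN _ _

lemma bb_vals : bb 0 = 1 ∧ bb 1 = 3 ∧ bb 2 = 3 ∧ bb 3 = 9/5 ∧ bb 4 = 27/35 := by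
  have := bb_succ 0
  have := bb_succ 1
  have := bb_succ 2
  have := bb_succ 3
  have : bb 0 = 1 := by simp [bb]
  norm_num at *
  refine ⟨?_, ?_, ?_, ?_, ?_⟩ <;> linarith

lemma bb_le_one (j : ℕ) (hj : 4 ≤ j) : bb j ≤ 1 := by
  induction j, hj using Nat.le_induction with
  | base => rw [bb_vals.2.2.2.2]; norm_num
  | succ j hj ih =>
    have := bb_succ j
    have h : (4:ℝ) ≤ j := by exact_mod_cast hj
    have := bb_pos (j+1)
    nlinarith

lemma ee_vals (N : ℝ) (t : ℕ) : ee N t 0 = 1 ∧ ee N t 1 = t/N ∧ ee N t 2 = t*(t-1)/2/N^2 ∧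
    ee N t 3 = t*(t-1)*(t-2)/6/N^3 ∧ ee N t 4 = t*(t-1)*(t-2)*(t-3)/24/N^4 := by
  have h := fun j => Nat.cast_choose_eq_descPochhammer_div ℝ t j
  refine ⟨?_, ?_, ?_, ?_, ?_⟩
  · simp [ee]
  · simp [ee]
  all_goals
    unfold ee
    rw [h]
    simp [descPochhammer_succ_right, Nat.factorial]
    try ring

lemma key1 (N : ℝ) (hN : 6 ≤ N) (t : ℕ) :
    0 ≤ N^3 - 2*t*N^2 + t*(t-1)*N + 7/15*(t*(t-1)*(t-2)) := by
  obtain ⟨M, hM, rfl⟩ : ∃ M : ℝ, 0 ≤ M ∧ N = M + 6 := ⟨N - 6, by linarith, by ring⟩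
  rcases Nat.lt_or_ge t 6 with h | h
  · interval_cases t <;> norm_num <;> nlinarith [pow_nonneg hM 2, pow_nonneg hM 3]
  · have h6 : (6:ℝ) ≤ t := by exact_mod_cast h
    have a1 : 0 ≤ M * (M + 6 - t)^2 := by positivity
    have a2 : 0 ≤ (M + 6 - t - t/12)^2 := by positivity
    have a3 : 0 ≤ (t:ℝ) * (7/15*(t-1)*(t-2) - t - t/24) := by
      apply mul_nonneg (by linarith)
      nlinarith
    nlinarith

lemma key2 (N : ℝ) (hN : 6 ≤ N) (t : ℕ) :
    0 ≤ N^3 + t*N^2 - t*(t-1)*N + 7/15*(t*(t-1)*(t-2)) := by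
  have ht : (0:ℝ) ≤ t := by positivity
  have a1 : 0 ≤ (t:ℝ) * (N^2 - t*N + 7/15*t^2 + N - 7/5*t + 14/15) := by
    apply mul_nonneg ht
    nlinarith [sq_nonneg (N - t/2), sq_nonneg ((t:ℝ) - 3)]
  have a2 : 0 ≤ N^3 := by positivity
  nlinarith

lemma key3 (N : ℝ) (hN : 6 ≤ N) (t : ℕ) :
    0 ≤ ee N t 2 - 4/5 * ee N t 3 + 16/7 * ee N t 4 := by
  have h0 : 0 < N := by linarith
  obtain ⟨-, -, e2, e3, e4⟩ := ee_vals N t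
  rw [e2, e3, e4]
  rcases t with _ | _ | t
  · simp
  · simp
  · have : 0 ≤ N^2 - 4/15*t*N + 4/21*(t*(t-1)) := by
      have ht : (0:ℝ) ≤ t := by positivity
      nlinarith [sq_nonneg (N - 2/15*t), sq_nonneg ((t:ℝ)-1)]
    have h2 : 0 ≤ ((t:ℝ)+2)*(t+1)/2/N^4 * (N^2 - 4/15*t*N + 4/21*(t*(t-1))) := by positivity
    convert h2 using 1
    push_cast
    field_simp
    ring

lemma TT_le (N : ℝ) (hN : 6 ≤ N) (t j0 K : ℕ) (hK : 3 ≤ K) : TT N t j0 K ≤ (1 + 1/N)^t := by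
  have h0 : 0 < N := by linarith
  obtain ⟨K, rfl⟩ := Nat.exists_eq_add_of_le' hK
  have hp := pow_ge h0 t 5
  simp only [sum_range_succ, range_zero, sum_empty, zero_add] at hp
  obtain ⟨b0, b1, b2, b3, b4⟩ := bb_vals
  have p := fun j => ee_nonneg h0 t j
  have p0 := p 0
  have p1 := p 1
  have p2 := p 2
  have p3 := p 3
  have p4 := p 4
  have g0 : hh N t 0 = ee N t 0 := by rw [hh, b0]; ring
  have g1 : hh N t 1 = 3 * ee N t 1 := by rw [hh, b1]
  have g2 : hh N t 2 = 3 * ee N t 2 := by rw [hh, b2]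
  have g3 : hh N t 3 = 9/5 * ee N t 3 := by rw [hh, b3]
  have g4 : hh N t 4 = 27/35 * ee N t 4 := by rw [hh, b4]
  have tl : ∀ j0 K, 1 ≤ j0 → TT N t j0 K ≤ hh N t j0 := fun j0 K h => tail_le h0 t K j0 h
  obtain ⟨e0, e1, e2, e3, -⟩ := ee_vals N t
  have hN3 : 0 < N^3 := by positivity
  rcases j0 with _ | _ | _ | _ | j0
  · have := tl 1 (K+2) (by norm_num)
    have r := TT_succ N t 0 (K+2)
    norm_num only [Nat.cast_zero, zero_add] at r
    change TT N t 0 (K+3) ≤ _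
    linarith
  · have := tl 3 (K+1) (by norm_num)
    have r := TT_succ N t 1 (K+2)
    have r2 := TT_succ N t 2 (K+1)
    norm_num only [Nat.cast_one, Nat.cast_ofNat] at r r2
    have k : 0 ≤ 1 - 2 * ee N t 1 + 2 * ee N t 2 + 14/5 * ee N t 3 := by
      have := div_nonneg (key1 N hN t) hN3.le
      rw [e1, e2, e3]
      refine this.trans_eq ?_
      field_simp
      ring
    change TT N t 1 (K+3) ≤ _
    linarith
  · have := tl 3 (K+2) (by norm_num)
    have r := TT_succ N t 2 (K+2)
    norm_num only [Nat.cast_ofNat] at r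
    have k : 0 ≤ 1 + ee N t 1 - 2 * ee N t 2 + 14/5 * ee N t 3 := by
      have := div_nonneg (key2 N hN t) hN3.le
      rw [e1, e2, e3]
      refine this.trans_eq ?_
      field_simp
      ring
    change TT N t 2 (K+3) ≤ _
    linarith
  · have := tl 4 (K+2) (by norm_num)
    have r := TT_succ N t 3 (K+2)
    norm_num only [Nat.cast_ofNat] at r
    have k := key3 N hN t
    change TT N t 3 (K+3) ≤ _
    linarith
  · refine (tl _ _ (by omega)).trans ?_
    have h1 := pow_ge h0 t (j0+1+1+1+1+1)
    rw [sum_range_succ] at h1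
    have h2 : 0 ≤ ∑ j ∈ range (j0+1+1+1+1), ee N t j := sum_nonneg fun j _ => p j
    have h3 := bb_le_one (j0+1+1+1+1) (by omega)
    have h4 := p (j0+1+1+1+1)
    unfold hh
    nlinarith

lemma sum_even_odd (g : ℕ → ℝ) (m : ℕ) :
    ∑ i ∈ range (2*m), g i = ∑ j ∈ range m, (g (2*j) + g (2*j+1)) := by
  induction m with
  | zero => simp
  | succ m ih => rw [show 2*(m+1) = 2*m+1+1 by ring, sum_range_succ, sum_range_succ, ih, sum_range_succ]; ring

noncomputable def cc (N : ℝ) (t j : ℕ) : ℝ :=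
  (1/4)^j * ((2*t).choose (2*j) - (2*t).choose (2*j+1) / N)

lemma cc_zero (N : ℝ) (t j : ℕ) (h : t < j) : cc N t j = 0 := by
  unfold cc
  rw [Nat.choose_eq_zero_of_lt (by omega), Nat.choose_eq_zero_of_lt (by omega)]
  simp

lemma binom (x y : ℝ) (t : ℕ) : (x + y)^(2*t) = ∑ j ∈ range (t+1),
    ((2*t).choose (2*j) * y^(2*j) * x^(2*(t-j)) + (2*t).choose (2*j+1) * y^(2*j+1) * x^(2*t-(2*j+1))) := by
  have : (x+y)^(2*t) = ∑ i ∈ range (2*(t+1)), (2*t).choose i * y^i * x^(2*t-i) := by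
    rw [show 2*(t+1) = 2*t+1+1 by ring, sum_range_succ, Nat.choose_eq_zero_of_lt (by omega), add_comm, add_pow]
    simp only [Nat.cast_zero, zero_mul, add_zero]
    exact sum_congr rfl fun i _ => by ring
  rw [this, sum_even_odd]
  refine sum_congr rfl fun j _ => ?_
  rw [Nat.mul_sub]

lemma binom_step (N : ℝ) (hN : 0 < N) (x : ℝ) (t L : ℕ) (hL : t + 1 ≤ L) :
    (N/2 + x) * (x - 1/2)^(2*t) + (N/2 - x) * (x + 1/2)^(2*t) =
      N * ∑ j ∈ range L, cc N t j * x^(2*(t-j)) := by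
  have hs : ∑ j ∈ range (t+1), cc N t j * x^(2*(t-j)) = ∑ j ∈ range L, cc N t j * x^(2*(t-j)) := by
    apply sum_subset
    · intro a; simp; omega
    · intro a _ ha
      rw [cc_zero N t a (by simpa using ha)]; simp
  rw [← hs, sub_eq_add_neg x, binom, binom, mul_sum, mul_sum, mul_sum, ← sum_add_distrib]
  refine sum_congr rfl fun j hj => ?_
  have hj : j ≤ t := by simp at hj; omega
  have e1 : (-(1/2:ℝ))^(2*j) = (1/4)^j := by rw [pow_mul]; norm_num
  have e2 : ((1/2:ℝ))^(2*j) = (1/4)^j := by rw [pow_mul]; norm_num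
  rw [pow_succ, pow_succ, e1, e2]
  rcases hj.lt_or_eq with h | h
  · have e3 : x^(2*(t-j)) = x * x^(2*t-(2*j+1)) := by rw [← pow_succ']; congr 1; omega
    rw [e3, cc]
    field_simp
    ring
  · subst h
    unfold cc
    rw [Nat.choose_eq_zero_of_lt (show 2*j < 2*j+1 by omega)]
    simp
    ring

lemma cc_sign (N : ℝ) (hN : 0 < N) (t j : ℕ) :
    cc N t j * (N * (2*j+1)) = (1/4)^j * (2*t).choose (2*j) * ((2*j+1)*N - (2*t-2*j)) := by
  rcases Nat.lt_or_ge t j with h | h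
  · rw [cc_zero _ _ _ h, Nat.choose_eq_zero_of_lt (by omega)]; simp
  · have h2 : ((2*t).choose (2*j+1) : ℝ) * (2*j+1) = (2*t).choose (2*j) * (2*t-2*j) := by
      have := Nat.choose_succ_right_eq (2*t) (2*j)
      have h := congrArg (Nat.cast : ℕ → ℝ) this
      push_cast [Nat.cast_sub (show 2*j ≤ 2*t by omega)] at h
      linarith
    calc _ = (1/4)^j * ((2*t).choose (2*j) * ((2*j+1)*N) - (2*t).choose (2*j+1) * (2*j+1)) := by
          unfold cc; field_simp
      _ = _ := by rw [h2]; ring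

lemma cc_GG (N : ℝ) (hN : 0 < N) (t j : ℕ) :
    cc N t j * GG N (t-j) = GG N t * (hh N t j - (2*((j:ℕ)+1)/3) * hh N t (j+1)) := by
  rcases Nat.lt_or_ge t j with h | h
  · rw [cc_zero _ _ _ h]
    simp [hh, ee, Nat.choose_eq_zero_of_lt h, Nat.choose_eq_zero_of_lt (show t < j+1 by omega)]
  · rw [mul_sub, ← coef1 hN t j h, ← coef2 hN t j h, cc]
    ring

noncomputable def Es (n : ℕ) (f : ℕ → ℝ) : ℝ := ∑ σ : Equiv.Perm (Fin (n+1)), f (descentCount σ)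

lemma Es_succ (n : ℕ) (f : ℕ → ℝ) :
    Es (n+1) f = Es n (fun k => ((k:ℝ)+1) * f k + ((n:ℝ)+1-k) * f (k+1)) := descent_rec n f

lemma Es_zero (f : ℕ → ℝ) : Es 0 f = f 0 := by
  have h : ∀ σ : Equiv.Perm (Fin 1), descentCount σ = 0 := by
    intro σ; rw [descentCount_eq]; rfl
  simp [Es, h]

noncomputable def Mm (d t : ℕ) : ℝ := Es d (fun k => ((k:ℝ) - d/2)^(2*t))

lemma Mm_nonneg (d t : ℕ) : 0 ≤ Mm d t :=
  sum_nonneg fun σ _ => by simp only [pow_mul]; positivity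

lemma Mm_succ (d t L : ℕ) (hL : t + 1 ≤ L) :
    Mm (d+1) t = ((d:ℝ)+2) * ∑ j ∈ range L, cc ((d:ℝ)+2) t j * Mm d (t-j) := by
  unfold Mm
  rw [Es_succ]
  unfold Es
  simp_rw [mul_sum]
  rw [sum_comm]
  refine sum_congr rfl fun σ _ => ?_
  rw [← mul_sum, ← binom_step _ (by positivity) _ t L hL]
  push_cast
  ring_nf

lemma Mm_step (d : ℕ) (hd : 4 ≤ d) (ih : ∀ t, Mm d t ≤ GG ((d:ℝ)+2) t * (d+1).factorial) (t : ℕ) :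
    Mm (d+1) t ≤ GG (((d+1 : ℕ):ℝ)+2) t * (d+1+1).factorial := by
  set N : ℝ := (d:ℝ)+2 with hNd
  have hN6 : 6 ≤ N := by
    have : (4:ℝ) ≤ d := by exact_mod_cast hd
    linarith
  have hN : 0 < N := by linarith
  have hex : ∃ j : ℕ, 2*t ≤ 2*j + (2*j+1)*(d+2) := ⟨t, by omega⟩
  obtain ⟨j0, hj0, hmin⟩ : ∃ j0 : ℕ, 2*t ≤ 2*j0 + (2*j0+1)*(d+2) ∧ ∀ j < j0, 2*j + (2*j+1)*(d+2) < 2*t :=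
    ⟨Nat.find hex, Nat.find_spec hex, fun j hj => not_le.1 (Nat.find_min hex hj)⟩
  have hpos : ∀ j : ℕ, 0 < N * (2*j+1) := fun j => by positivity
  have hneg : ∀ j < j0, cc N t j ≤ 0 := by
    intro j hj
    have h := hmin j hj
    have h' : 2*(j:ℝ) + (2*j+1)*(d+2) < 2*t := by exact_mod_cast h
    refine nonpos_of_mul_nonpos_left (b := N * (2*j+1)) ?_ (hpos j)
    rw [cc_sign N hN]
    exact mul_nonpos_of_nonneg_of_nonpos (by positivity) (by linarith)
  have hnn : ∀ j, 0 ≤ cc N t (j0+j) := by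
    intro j
    have h : 2*t ≤ 2*(j0+j) + (2*(j0+j)+1)*(d+2) := by nlinarith
    have h' : 2*(t:ℝ) ≤ 2*((j0+j : ℕ):ℝ) + (2*((j0+j : ℕ):ℝ)+1)*(d+2) := by exact_mod_cast h
    refine nonneg_of_mul_nonneg_left (b := N * (2*((j0+j : ℕ):ℝ)+1)) ?_ (hpos _)
    rw [cc_sign N hN]
    exact mul_nonneg (by positivity) (by linarith)
  have hG := GG_pos N hN t
  have hT := TT_le N hN6 t j0 (t+3) (by omega)
  have key : ∑ j ∈ range (j0 + (t+3)), cc N t j * Mm d (t-j) ≤ GG N t * (1+1/N)^t * (d+1).factorial := by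
    rw [sum_range_add]
    have a1 : ∑ j ∈ range j0, cc N t j * Mm d (t-j) ≤ 0 :=
      sum_nonpos fun j hj => mul_nonpos_of_nonpos_of_nonneg (hneg j (mem_range.1 hj)) (Mm_nonneg _ _)
    have a2 : ∑ j ∈ range (t+3), cc N t (j0+j) * Mm d (t-(j0+j)) ≤ GG N t * TT N t j0 (t+3) * (d+1).factorial := by
      unfold TT
      rw [mul_sum, sum_mul]
      refine sum_le_sum fun j _ => ?_
      rw [← cc_GG N hN, mul_assoc]
      exact mul_le_mul_of_nonneg_left (ih _) (hnn j)
    have a3 : GG N t * TT N t j0 (t+3) * (d+1).factorial ≤ GG N t * (1+1/N)^t * (d+1).factorial := by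
      gcongr
    linarith
  rw [Mm_succ d t (j0 + (t+3)) (by omega)]
  calc _ ≤ N * (GG N t * (1+1/N)^t * (d+1).factorial) := mul_le_mul_of_nonneg_left key hN.le
    _ = _ := by
      rw [Nat.factorial_succ (d+1)]
      unfold GG
      have : (((d+1:ℕ):ℝ)+2)/12 = N/12 * (1+1/N) := by
        rw [hNd]; push_cast; field_simp; ring
      rw [this, mul_pow]
      push_cast
      rw [hNd]
      ring

lemma base0 (t : ℕ) : Mm 0 t ≤ GG 2 t * 1 := by
  unfold Mm
  rw [Es_zero]
  rcases t with _ | t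
  · simp [GG_zero]
  · have := GG_pos 2 (by norm_num) (t+1)
    norm_num [pow_mul]; exact this.le

lemma GG_ge (N a : ℝ) (t0 : ℕ) (ha : 0 ≤ a) (hN : 0 < N) (h0 : a ≤ N/12*(2*t0+1)) (t : ℕ) (ht : t0 ≤ t)
    (u : ℕ → ℝ) (hu : ∀ t, u (t+1) ≤ a * u t) (h1 : u t0 ≤ GG N t0) : u t ≤ GG N t := by
  induction t, ht using Nat.le_induction with
  | base => exact h1
  | succ t ht ih =>
    rw [GG_succ]
    have h2 : (t0:ℝ) ≤ t := by exact_mod_cast ht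
    have := GG_pos N hN t
    calc u (t+1) ≤ a * u t := hu t
      _ ≤ a * GG N t := by gcongr
      _ ≤ _ := by
        gcongr
        exact h0.trans (by gcongr)

lemma base1 (t : ℕ) : Mm 1 t ≤ GG 3 t * 2 := by
  unfold Mm
  simp only [Es_succ, Es_zero]
  have := GG_ge 3 (1/4) 0 (by norm_num) (by norm_num) (by norm_num) t (by omega) (fun t => (1/4)^t)
    (fun t => by rw [pow_succ']) (by simp [GG_zero])
  norm_num [pow_mul] at *
  linarith

lemma base2 (t : ℕ) : Mm 2 t ≤ GG 4 t * 6 := by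
  unfold Mm
  simp only [Es_succ, Es_zero]
  rcases t with _ | t
  · norm_num [GG_zero]
  have := GG_ge 4 1 1 (by norm_num) (by norm_num) (by norm_num) (t+1) (by omega) (fun t => 1/3)
    (fun t => by simp) (by norm_num [GG_zero, GG_succ])
  norm_num [pow_mul] at *
  linarith

lemma base3 (t : ℕ) : Mm 3 t ≤ GG 5 t * 24 := by
  unfold Mm
  simp only [Es_succ, Es_zero]
  rcases Nat.lt_or_ge t 3 with h | h
  · interval_cases t <;> norm_num [GG_zero, GG_succ]
  have := GG_ge 5 (9/4) 3 (by norm_num) (by norm_num) (by norm_num) t h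
    (fun t => 1/12*(9/4)^t + 11/12*(1/4)^t)
    (fun t => by
      have : (0:ℝ) < (1/4)^t := by positivity
      simp only [pow_succ]; linarith) (by norm_num [GG_zero, GG_succ])
  norm_num [pow_mul] at *
  linarith

lemma base4 (t : ℕ) : Mm 4 t ≤ GG 6 t * 120 := by
  unfold Mm
  simp only [Es_succ, Es_zero]
  rcases Nat.lt_or_ge t 4 with h | h
  · interval_cases t <;> norm_num [GG_zero, GG_succ]
  have := GG_ge 6 4 4 (by norm_num) (by norm_num) (by norm_num) t h
    (fun t => 1/60*4^t + 26/60)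
    (fun t => by
      simp only [pow_succ]; linarith) (by norm_num [GG_zero, GG_succ])
  have ht : (0:ℝ)^t = 0 := zero_pow (by omega)
  norm_num [pow_mul] at this ⊢
  rw [ht]
  linarith

lemma Mm_le (d t : ℕ) : Mm d t ≤ GG ((d:ℝ)+2) t * (d+1).factorial := by
  rcases Nat.lt_or_ge d 4 with h | h
  · interval_cases d
    · have := base0 t; norm_num [Nat.factorial] at *; linarith
    · have := base1 t; norm_num [Nat.factorial] at *; linarith
    · have := base2 t; norm_num [Nat.factorial] at *; linarith
    · have := base3 t; norm_num [Nat.factorial] at *; linarith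
  · induction d, h using Nat.le_induction generalizing t with
    | base => have := base4 t; norm_num [Nat.factorial] at *; linarith
    | succ d hd ih => exact Mm_step d hd ih t

open Nat in
/-- The `2t`-th central moment of the descent statistic is bounded by the
corresponding moment of the normal distribution with variance `(d+2)/12`. -/
theorem stmt4 (d t : ℕ) :
    (∑ i ∈ Finset.range (d + 1), (eulerian (d + 1) i : ℝ) * ((i : ℝ) - (d : ℝ) / 2) ^ (2 * t))
      ≤ (((d : ℝ) + 2) / 12) ^ t * ((2 * t - 1)‼ : ℝ) * (Nat.factorial (d + 1) : ℝ) := by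
  rw [eulerian_sum d (fun i => ((i:ℝ) - (d:ℝ)/2)^(2*t))]
  exact Mm_le d t
end

section
/- Let a, b ≥ 0 be integers, set d = a + b + 2, and let k be an integer with 0 ≤ k ≤ min(a,b) + 1. Then (a+1)! · (b+1)! · ∑_{i=0}^{d} A(d+1,i) · i^k = (d+1)! · ∑_{u=0}^{a} ∑_{v=0}^{b} A(a+1,u) · A(b+1,v) · (1 + u + v)^k. (Equivalently, E[X_d^k] = E[(1 + X_a + X_b)^k], where X_n denotes the number of descents of a uniformly random permutation of {1,...,n+1} and X_a, X_b are independent.) -/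
open Finset

/-- number of descents of a sequence -/
def seqDes (s : ℕ → ℕ) (m : ℕ) : ℕ := ∑ i ∈ range m, if s (i+1) < s i then 1 else 0

/-- extension of a permutation to the naturals -/
def extP {n : ℕ} (σ : Equiv.Perm (Fin n)) (j : ℕ) : ℕ := if h : j < n then (σ ⟨j, h⟩ : ℕ) else 0

lemma descentCount_eq_s7 (m : ℕ) (σ : Equiv.Perm (Fin (m+1))) :
    descentCount σ = seqDes (extP σ) m := by
  unfold descentCount seqDes
  rw [Finset.card_filter, Fin.sum_univ_castSucc]
  rw [← Fin.sum_univ_eq_sum_range (fun i => if extP σ (i+1) < extP σ i then 1 else 0)]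
  have h2 : ∀ i : Fin m, (i:ℕ) < m + 1 := fun i => by omega
  simp only [Fin.val_last, lt_self_iff_false, IsEmpty.exists_iff, if_false, add_zero]
  apply Finset.sum_congr rfl
  intro i _
  have e : (⟨(i:ℕ), h2 i⟩ : Fin (m+1)) = i.castSucc := rfl
  simp [extP, h2, e]

lemma seqDes_le (s : ℕ → ℕ) (m : ℕ) : seqDes s m ≤ m := by
  unfold seqDes
  calc _ ≤ ∑ i ∈ range m, 1 := by
        apply Finset.sum_le_sum; intro i _; split_ifs <;> simp
    _ = m := by simp

/-- insert the maximum at place `p` -/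
def ins {n : ℕ} (p : Fin (n+1)) (σ : Equiv.Perm (Fin n)) : Equiv.Perm (Fin (n+1)) :=
  (finSuccEquiv' p).trans ((Equiv.optionCongr σ).trans (finSuccEquiv' (Fin.last n)).symm)

lemma ins_at {n : ℕ} (p : Fin (n+1)) (σ : Equiv.Perm (Fin n)) : ins p σ p = Fin.last n := by
  simp [ins]

lemma ins_succAbove {n : ℕ} (p : Fin (n+1)) (σ : Equiv.Perm (Fin n)) (i : Fin n) :
    ins p σ (p.succAbove i) = (σ i).castSucc := by
  simp [ins]

lemma ins_inj (n : ℕ) : Function.Injective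
    (fun x : Fin (n+1) × Equiv.Perm (Fin n) => ins x.1 x.2) := by
  rintro ⟨p, σ⟩ ⟨q, ρ⟩ h
  simp only at h
  have hpq : p = q := by
    apply (ins p σ).injective
    rw [ins_at, h, ins_at]
  subst hpq
  have : σ = ρ := by
    ext i
    have := congrArg (fun t => t (p.succAbove i)) h
    simp only [ins_succAbove] at this
    simpa using congrArg Fin.val this
  rw [this]

lemma ins_bij (n : ℕ) : Function.Bijective
    (fun x : Fin (n+1) × Equiv.Perm (Fin n) => ins x.1 x.2) := by
  rw [Fintype.bijective_iff_injective_and_card]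
  refine ⟨ins_inj n, ?_⟩
  simp [Fintype.card_perm, Nat.factorial_succ]

lemma ext_at {n : ℕ} (p : Fin (n+1)) (σ : Equiv.Perm (Fin n)) : extP (ins p σ) p = n := by
  have h := p.2
  simp only [extP, h, dif_pos, Fin.eta, ins_at, Fin.val_last]

lemma ext_lt {n : ℕ} (p : Fin (n+1)) (σ : Equiv.Perm (Fin n)) (j : ℕ) (h : j < p) :
    extP (ins p σ) j = extP σ j := by
  have h1 : j < n := by omega
  have := ins_succAbove p σ ⟨j, h1⟩
  rw [Fin.succAbove_of_castSucc_lt _ _ (by simpa [Fin.lt_def] using h)] at this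
  have h2 : j < n + 1 := by omega
  simp only [extP, h1, h2, dif_pos]
  exact congrArg Fin.val this

lemma ext_gt {n : ℕ} (p : Fin (n+1)) (σ : Equiv.Perm (Fin n)) (j : ℕ) (h : (p:ℕ) ≤ j) (h1 : j < n) :
    extP (ins p σ) (j+1) = extP σ j := by
  have := ins_succAbove p σ ⟨j, h1⟩
  rw [Fin.succAbove_of_le_castSucc _ _ (by simpa [Fin.le_def] using h)] at this
  have h2 : j + 1 < n + 1 := by omega
  simp only [extP, h1, h2, dif_pos]
  exact congrArg Fin.val this

lemma ext_bd {n : ℕ} (σ : Equiv.Perm (Fin n)) (j : ℕ) (h : j < n) : extP σ j < n := by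
  simp [extP, h]

lemma des_last (m : ℕ) (σ : Equiv.Perm (Fin (m+1))) :
    seqDes (extP (ins (Fin.last (m+1)) σ)) (m+1) = seqDes (extP σ) m := by
  unfold seqDes
  rw [Finset.sum_range_succ]
  have h1 := ext_at (Fin.last (m+1)) σ
  have h2 := ext_lt (Fin.last (m+1)) σ m (by simp)
  have h3 := ext_bd σ m (by omega)
  simp only [Fin.val_last] at h1
  rw [if_neg (by omega), add_zero]
  apply Finset.sum_congr rfl
  intro i hi
  rw [Finset.mem_range] at hi
  rw [ext_lt _ _ _ (by simp; omega), ext_lt _ _ _ (by simp; omega)]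

lemma des_zero (m : ℕ) (σ : Equiv.Perm (Fin (m+1))) :
    seqDes (extP (ins 0 σ)) (m+1) = seqDes (extP σ) m + 1 := by
  unfold seqDes
  rw [Finset.sum_range_succ']
  have h1 := ext_at 0 σ
  have h2 := ext_gt 0 σ 0 (by simp) (by omega)
  have h3 := ext_bd σ 0 (by omega)
  simp only [Fin.val_zero] at h1
  rw [if_pos (by omega)]
  congr 1
  apply Finset.sum_congr rfl
  intro i hi
  rw [Finset.mem_range] at hi
  rw [ext_gt _ _ _ (by simp) (by omega), ext_gt _ _ _ (by simp) (by omega)]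

lemma des_mid (m : ℕ) (σ : Equiv.Perm (Fin (m+1))) (p : Fin (m+2)) (q : ℕ) (hq : q < m)
    (hp : (p : ℕ) = q + 1) :
    seqDes (extP (ins p σ)) (m+1) =
      seqDes (extP σ) m + if extP σ (q+1) < extP σ q then 0 else 1 := by
  obtain ⟨r, hr⟩ : ∃ r, m = q + 1 + r := ⟨m - (q+1), by omega⟩
  have e1 : m + 1 = (q + 1 + 1) + r := by omega
  unfold seqDes
  have e2 : range (m+1) = range (q + 1 + 1 + r) := by rw [e1]
  have e3 : range m = range (q + 1 + r) := by rw [← hr]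
  rw [e2, e3, Finset.sum_range_add _ (q+1+1) r, Finset.sum_range_add _ (q+1) r, Finset.sum_range_succ, Finset.sum_range_succ,
    Finset.sum_range_succ]
  have h1 := ext_at p σ
  rw [hp] at h1
  have h2 := ext_lt p σ q (by omega)
  have h4 := ext_gt p σ (q+1) (by omega) (by omega)
  have h3 := ext_bd σ q (by omega)
  have h5 := ext_bd σ (q+1) (by omega)
  have A : ∑ i ∈ range q, (if extP (ins p σ) (i+1) < extP (ins p σ) i then 1 else 0)
      = ∑ i ∈ range q, (if extP σ (i+1) < extP σ i then 1 else 0) := by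
    apply Finset.sum_congr rfl
    intro i hi
    rw [Finset.mem_range] at hi
    rw [ext_lt _ _ _ (by omega), ext_lt _ _ _ (by omega)]
  have B : ∑ i ∈ range r, (if extP (ins p σ) (q+1+1+i+1) < extP (ins p σ) (q+1+1+i) then 1 else 0)
      = ∑ i ∈ range r, (if extP σ (q+1+i+1) < extP σ (q+1+i) then 1 else 0) := by
    apply Finset.sum_congr rfl
    intro i hi
    rw [Finset.mem_range] at hi
    rw [show q+1+1+i+1 = (q+1+i+1)+1 by ring, show q+1+1+i = (q+1+i)+1 by ring]
    rw [ext_gt _ _ _ (by omega) (by omega), ext_gt _ _ _ (by omega) (by omega)]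
  rw [A, B, if_neg (by omega : ¬ extP (ins p σ) (q+1) < _), if_pos (by omega)]
  split_ifs <;> omega

lemma sum_ite_seqDes {R : Type*} [CommRing R] (s : ℕ → ℕ) (m : ℕ) (x y : R) :
    ∑ q ∈ range m, (if s (q+1) < s q then x else y)
      = (seqDes s m : R) * x + ((m : R) - seqDes s m) * y := by
  induction m with
  | zero => simp [seqDes]
  | succ m ih =>
    have : seqDes s (m+1) = seqDes s m + if s (m+1) < s m then 1 else 0 := by
      unfold seqDes; rw [Finset.sum_range_succ]
    rw [Finset.sum_range_succ, ih, this]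
    split_ifs <;> push_cast <;> ring

lemma sum_ins {R : Type*} [CommRing R] (f : ℕ → R) (m : ℕ) (σ : Equiv.Perm (Fin (m+1))) :
    ∑ p : Fin (m+2), f (descentCount (ins p σ)) =
      (1 + (descentCount σ : R)) * f (descentCount σ)
      + (((m + 1 : ℕ) : R) - descentCount σ) * f (descentCount σ + 1) := by
  simp only [descentCount_eq_s7]
  rw [Fin.sum_univ_castSucc, des_last, Fin.sum_univ_succ]
  have : ∀ i : Fin m, f (seqDes (extP (ins i.succ.castSucc σ)) (m+1)) =
      (fun q => if extP σ (q+1) < extP σ q then f (seqDes (extP σ) m)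
        else f (seqDes (extP σ) m + 1)) (i : ℕ) := by
    intro i
    rw [des_mid m σ _ i i.2 (by simp)]
    simp only
    split_ifs <;> rfl
  rw [Finset.sum_congr rfl (fun i _ => this i), Fin.sum_univ_eq_sum_range (fun q => if extP σ (q+1) < extP σ q then f (seqDes (extP σ) m)
        else f (seqDes (extP σ) m + 1)), sum_ite_seqDes,
    Fin.castSucc_zero, des_zero]
  push_cast
  ring

lemma sum_rec {R : Type*} [CommRing R] (f : ℕ → R) (n : ℕ) :
    ∑ τ : Equiv.Perm (Fin (n+1)), f (descentCount τ) =
      ∑ σ : Equiv.Perm (Fin n), ((1 + (descentCount σ : R)) * f (descentCount σ)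
      + ((n : R) - descentCount σ) * f (descentCount σ + 1)) := by
  rcases n with _ | m
  · have h0 : ∀ σ : Equiv.Perm (Fin 0), descentCount σ = 0 := by
      intro σ; simp [descentCount]
    have h1 : ∀ σ : Equiv.Perm (Fin (0+1)), descentCount σ = 0 := by
      intro σ; rw [descentCount_eq_s7]; simp [seqDes]
    simp only [h0, h1]
    simp [Fintype.card_perm]
  · rw [← (ins_bij (m+1)).sum_comp, Fintype.sum_prod_type_right]
    exact Finset.sum_congr rfl (fun σ _ => sum_ins f m σ)

lemma sum_eul {R : Type*} [CommRing R] (f : ℕ → R) (m : ℕ) :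
    ∑ i ∈ range (m+1), (eulerian (m+1) i : R) * f i =
      ∑ σ : Equiv.Perm (Fin (m+1)), f (descentCount σ) := by
  rw [← Finset.sum_fiberwise_of_maps_to (t := range (m+1)) (g := descentCount)]
  · apply Finset.sum_congr rfl
    intro i _
    rw [Finset.sum_congr rfl (g := fun _ => f i)]
    · simp [eulerian]
    · intro σ h
      rw [(Finset.mem_filter.1 h).2]
  · intro σ _
    rw [Finset.mem_range, descentCount_eq_s7]
    have := seqDes_le (extP σ) m
    omega

open PowerSeries in
noncomputable def PP (n : ℕ) : PowerSeries ℚ :=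
  ∑ σ : Equiv.Perm (Fin n), (PowerSeries.exp ℚ) ^ (descentCount σ)

open PowerSeries in
noncomputable def ww : PowerSeries ℚ := PowerSeries.mk fun n => 1 / ((n+1).factorial : ℚ)

lemma ww_eq : PowerSeries.X * ww = PowerSeries.exp ℚ - 1 := by
  ext n
  rcases n with _ | n
  · simp
  · rw [PowerSeries.coeff_succ_X_mul]
    simp [ww, PowerSeries.coeff_exp, PowerSeries.coeff_one]

lemma dexp : PowerSeries.derivative ℚ (PowerSeries.exp ℚ) = PowerSeries.exp ℚ := by
  ext n
  simp [PowerSeries.coeff_derivative, PowerSeries.coeff_exp, Nat.factorial_succ]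
  field_simp

lemma PP_rec (n : ℕ) : PP (n+1) = (1 + (n : PowerSeries ℚ) * PowerSeries.exp ℚ) * PP n
    + (1 - PowerSeries.exp ℚ) * PowerSeries.derivative ℚ (PP n) := by
  unfold PP
  rw [sum_rec (fun d => (PowerSeries.exp ℚ) ^ d), map_sum, Finset.mul_sum, Finset.mul_sum,
    ← Finset.sum_add_distrib]
  apply Finset.sum_congr rfl
  intro σ _
  rw [Derivation.leibniz_pow, dexp]
  rcases descentCount σ with _ | d
  · simp
  · simp only [Nat.add_sub_cancel, smul_eq_mul, nsmul_eq_mul]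
    push_cast
    ring

lemma PP_main (n : ℕ) : ∃ T, PowerSeries.exp ℚ * PP n
    = (n.factorial : PowerSeries ℚ) * ww ^ (n+1) + PowerSeries.X ^ (n+1) * T := by
  have hw := ww_eq
  have hd := congrArg (PowerSeries.derivative ℚ) hw
  rw [map_sub, dexp, Derivation.leibniz] at hd
  simp only [smul_eq_mul, PowerSeries.derivative_X, Derivation.map_one_eq_zero, sub_zero,
    mul_one] at hd
  induction n with
  | zero =>
    refine ⟨PowerSeries.derivative ℚ ww, ?_⟩
    have : PP 0 = 1 := by simp [PP, descentCount]
    rw [this, ← hd]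
    simp
    ring
  | succ n ih =>
    obtain ⟨T, hT⟩ := ih
    have hD := congrArg (PowerSeries.derivative ℚ) hT
    rw [map_add, Derivation.leibniz, Derivation.leibniz, Derivation.leibniz, dexp,
      Derivation.leibniz_pow, Derivation.leibniz_pow, PowerSeries.derivative_X,
      Derivation.map_natCast] at hD
    simp only [smul_eq_mul, nsmul_eq_mul, Nat.add_sub_cancel, mul_zero, add_zero, mul_one] at hD
    rw [PP_rec]
    set E := PowerSeries.exp ℚ
    set W' := PowerSeries.derivative ℚ ww
    set T' := PowerSeries.derivative ℚ T
    set P' := PowerSeries.derivative ℚ (PP n)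
    refine ⟨((n : PowerSeries ℚ) + 1) * W' * T - ww * T', ?_⟩
    have hE : E = 1 + PowerSeries.X * ww := by rw [hw]; ring
    push_cast [Nat.factorial_succ] at *
    have key : E * ((1 + (n : PowerSeries ℚ) * E) * PP n + (1 - E) * P') =
      (n + 1) * E * (E * PP n) + (1 - E) * (E * P' + PP n * E) := by ring
    rw [key, hT, hD]
    linear_combination (-(((n : PowerSeries ℚ) + 1) *
      ((n.factorial : PowerSeries ℚ) * ww ^ (n+1) + PowerSeries.X ^ (n+1) * T))) * hd
      + ((n.factorial : PowerSeries ℚ) * (((n : PowerSeries ℚ) + 1) * (ww ^ n * W'))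
        + (PowerSeries.X ^ (n+1) * T' + T * (((n : PowerSeries ℚ) + 1) * PowerSeries.X ^ n))) * hw

lemma PP_eul (m : ℕ) : PP (m+1) =
    ∑ i ∈ range (m+1), (eulerian (m+1) i : PowerSeries ℚ) * PowerSeries.exp ℚ ^ i :=
  (sum_eul (fun d => PowerSeries.exp ℚ ^ d) m).symm

lemma coeff_nat_mul_exp (c i k : ℕ) :
    PowerSeries.coeff k ((c : PowerSeries ℚ) * PowerSeries.exp ℚ ^ i)
      = (c : ℚ) * (i : ℚ) ^ k / k.factorial := by
  rw [← map_natCast (PowerSeries.C (R := ℚ)), PowerSeries.coeff_C_mul, PowerSeries.exp_pow_eq_rescale_exp,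
    PowerSeries.coeff_rescale, PowerSeries.coeff_exp]
  simp
  ring

lemma PP_prod (a b : ℕ) : PowerSeries.X ^ (min a b + 2) ∣
    (((a+1).factorial * (b+1).factorial : ℕ) : PowerSeries ℚ) * PP (a+b+3)
      - ((a+b+3).factorial : PowerSeries ℚ) * (PowerSeries.exp ℚ * PP (a+1) * PP (b+1)) := by
  obtain ⟨T, hT⟩ := PP_main (a+b+3)
  obtain ⟨U, hU⟩ := PP_main (a+1)
  obtain ⟨V, hV⟩ := PP_main (b+1)
  have hE := PowerSeries.exp_mul_exp_neg_eq_one (A := ℚ)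
  set E := PowerSeries.exp ℚ
  set E' := PowerSeries.evalNegHom E
  have d1 : (PowerSeries.X : PowerSeries ℚ) ^ (min a b + 2) ∣ PowerSeries.X ^ (a+b+3+1) :=
    pow_dvd_pow _ (by omega)
  have d2 : (PowerSeries.X : PowerSeries ℚ) ^ (min a b + 2) ∣ PowerSeries.X ^ (a+1+1) :=
    pow_dvd_pow _ (by omega)
  have d3 : (PowerSeries.X : PowerSeries ℚ) ^ (min a b + 2) ∣ PowerSeries.X ^ (b+1+1) :=
    pow_dvd_pow _ (by omega)
  set F1 := ((a+1).factorial : PowerSeries ℚ)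
  set F2 := ((b+1).factorial : PowerSeries ℚ)
  set F3 := ((a+b+3).factorial : PowerSeries ℚ)
  set X1 := (PowerSeries.X : PowerSeries ℚ) ^ (a+b+3+1)
  set X2 := (PowerSeries.X : PowerSeries ℚ) ^ (a+1+1)
  set X3 := (PowerSeries.X : PowerSeries ℚ) ^ (b+1+1)
  have key : ((((a+1).factorial * (b+1).factorial : ℕ) : PowerSeries ℚ) * PP (a+b+3)
      - F3 * (E * PP (a+1) * PP (b+1))) =
      X1 * (E' * F1 * F2 * T) - X2 * (E' * F3 * U * (E * PP (b+1)))
        - X3 * (E' * F3 * V * (F1 * ww ^ (a+1+1))) := by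
    have e : ((((a+1).factorial * (b+1).factorial : ℕ) : PowerSeries ℚ) * PP (a+b+3)
      - F3 * (E * PP (a+1) * PP (b+1))) = (E * E') * (F1 * F2 * PP (a+b+3)
      - F3 * (E * PP (a+1) * PP (b+1))) := by
      rw [hE]; push_cast; ring
    rw [e]
    linear_combination E' * F1 * F2 * hT - E' * F3 * (E * PP (b+1)) * hU
      - E' * F3 * (F1 * ww ^ (a+1+1)) * hV
  rw [key]
  exact dvd_sub (dvd_sub (d1.mul_right _) (d2.mul_right _)) (d3.mul_right _)

/-- For `d = a + b + 2` and `k ≤ min(a,b) + 1`,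
`E[X_d^k] = E[(1 + X_a + X_b)^k]` for the descent statistics. -/
theorem stmt7 (a b k : ℕ) (hk : k ≤ min a b + 1) :
    (Nat.factorial (a + 1) : ℚ) * (Nat.factorial (b + 1) : ℚ) *
        ∑ i ∈ Finset.range (a + b + 3), (eulerian (a + b + 3) i : ℚ) * (i : ℚ) ^ k
      = (Nat.factorial (a + b + 3) : ℚ) *
          ∑ u ∈ Finset.range (a + 1), ∑ v ∈ Finset.range (b + 1),
            (eulerian (a + 1) u : ℚ) * (eulerian (b + 1) v : ℚ) *
              (1 + (u : ℚ) + (v : ℚ)) ^ k := by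
  have h := PowerSeries.X_pow_dvd_iff.1 (PP_prod a b) k (by omega)
  rw [map_sub, sub_eq_zero] at h
  have hl : PowerSeries.coeff k ((((a+1).factorial * (b+1).factorial : ℕ) : PowerSeries ℚ)
      * PP (a+b+3)) = (Nat.factorial (a + 1) : ℚ) * (Nat.factorial (b + 1) : ℚ) *
        (∑ i ∈ Finset.range (a + b + 3), (eulerian (a + b + 3) i : ℚ) * (i : ℚ) ^ k)
          / k.factorial := by
    rw [PP_eul, ← map_natCast (PowerSeries.C (R := ℚ)), PowerSeries.coeff_C_mul, map_sum]
    simp only [coeff_nat_mul_exp]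
    rw [← Finset.sum_div]
    push_cast
    ring
  have hr : PowerSeries.coeff k (((a+b+3).factorial : PowerSeries ℚ)
      * (PowerSeries.exp ℚ * PP (a+1) * PP (b+1))) = (Nat.factorial (a + b + 3) : ℚ) *
          (∑ u ∈ Finset.range (a + 1), ∑ v ∈ Finset.range (b + 1),
            (eulerian (a + 1) u : ℚ) * (eulerian (b + 1) v : ℚ) *
              (1 + (u : ℚ) + (v : ℚ)) ^ k) / k.factorial := by
    have e : PowerSeries.exp ℚ * PP (a+1) * PP (b+1) =
        ∑ u ∈ Finset.range (a + 1), ∑ v ∈ Finset.range (b + 1),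
          ((eulerian (a + 1) u * eulerian (b + 1) v : ℕ) : PowerSeries ℚ)
            * PowerSeries.exp ℚ ^ (1 + u + v) := by
      rw [PP_eul, PP_eul, Finset.mul_sum (range (a+1)), Finset.sum_mul_sum]
      refine Finset.sum_congr rfl fun u _ => Finset.sum_congr rfl fun v _ => ?_
      push_cast
      ring
    rw [e, ← map_natCast (PowerSeries.C (R := ℚ)), PowerSeries.coeff_C_mul]
    simp only [map_sum, coeff_nat_mul_exp]
    simp only [← Finset.sum_div]
    push_cast
    ring
  rw [hl, hr] at h
  have hk0 : (k.factorial : ℚ) ≠ 0 := by exact_mod_cast k.factorial_ne_zero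
  exact (div_left_inj' hk0).1 h
end
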